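/- Let k be a complete nonarchimedean valued field with nontrivial valuation, I and J sets, V and W families of Banach k-vector spaces indexed by I and J respectively, and f : ∏V → ⊕W a nonzero bounded k-linear map. Then for every r ∈ (0,∞) there exist r' > ‖f‖⁻¹ r, a finite set U₀ ⊆ β_ω I of ω₁-complete ultrafilters on I, and a finite subset J₀ ⊆ J such that f maps ∏^{U₀,r'} V := { x ∈ ∏V : for every 𝓕 ∈ U₀, {i : x(i) = 0} ∈ 𝓕, and ‖x(i)‖ ≤ r' for all i } into ⊕^{J₀,r} W := { y ∈ ⊕W : ‖y(j)‖ ≤ r for all j ∉ J₀ }. -/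

import Mathlib

open scoped ENNReal

/-- An ultrafilter is closed under countable intersections (ω₁-complete). -/
def CountablyComplete {α : Type*} (F : Ultrafilter α) : Prop :=
  ∀ s : ℕ → Set α, (∀ n, s n ∈ F) → (⋂ n, s n) ∈ F

/-!
Call `B ⊆ I` large if, for some radius `R > ‖f‖⁻¹ r`, only finitely many coordinates of `f` exceed
`r` on the ball of radius `R` in the subspace of vectors vanishing on `B`. The large sets form a
filter `l`. A gliding hump shows that every `N : I → ℕ` is eventually bounded along `l`: otherwise
there are vectors `x n` vanishing on `{N ≤ n}`, hence pointwise summable, whose images exceed `r`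
at distinct coordinates `j n` and are so separated in size that the image of `∑ x n` exceeds `r`
at every `j n`.

Such a filter is closed under countable intersections, and so is every finer ultrafilter. There are
only finitely many of these: from infinitely many one could choose countably many containing
pairwise disjoint sets `D n`, and the function with value `n` on `D n` would be unbounded. Finally,
`l` is the intersection of the ultrafilters refining it, and closure under countable intersections
makes the radius and the finite set of coordinates uniform over all vectors which vanish on some
large set.
-/

open Filter Set Topology
open scoped Pointwise

theorem exists_pairwise_disjoint_mem_ultrafilter_of_infinite {α : Type*}
    {S : Set (Ultrafilter α)} (hS : S.Infinite) :
    ∃ D : ℕ → Set α, Pairwise (Function.onFun Disjoint D) ∧ ∀ n, ∃ F ∈ S, D n ∈ F := by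
  -- An accumulation point `F₀` of `S` has members of `S` in each of its neighbourhoods, so sets can
  -- be split off one after another as long as their complements stay in `F₀`.
  obtain ⟨F₀, hF₀⟩ := hS.exists_accPt_principal
  have exists_next (s : Finset (Set α)) (hs : ∀ A ∈ s, (∃ F ∈ S, A ∈ F) ∧ Aᶜ ∈ F₀) :
      ∃ B, ((∃ F ∈ S, B ∈ F) ∧ Bᶜ ∈ F₀) ∧ ∀ A ∈ s, Disjoint A B := by
    have hC : (⋂ A ∈ s, Aᶜ) ∈ F₀ := (biInter_finset_mem s).2 fun A hA ↦ (hs A hA).2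
    obtain ⟨F, ⟨hne, hFS⟩, hCF⟩ := ((accPt_iff_frequently.1 hF₀).and_eventually
      ((ultrafilter_isOpen_basic _).mem_nhds hC)).exists
    obtain ⟨B, hBF, hB⟩ : ∃ B ∈ F, B ∉ F₀ := by
      by_contra! h
      exact hne (Ultrafilter.coe_le_coe.1 h).symm
    refine ⟨B ∩ ⋂ A ∈ s, Aᶜ, ⟨⟨F, hFS, inter_mem hBF hCF⟩, ?_⟩, fun A hA ↦ ?_⟩
    · exact mem_of_superset (Ultrafilter.compl_mem_iff_notMem.2 hB)
        (compl_subset_compl.2 inter_subset_left)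
    · exact disjoint_left.2 fun a ha h ↦ mem_iInter₂.1 h.2 A hA ha
  obtain ⟨D, hD, hdisj⟩ := exists_seq_of_forall_finset_exists' _ Disjoint exists_next
  exact ⟨D, hdisj, fun n ↦ (hD n).1⟩

/-- The filters along which every `ℕ`-valued function is eventually bounded. -/
def BoundsNatFunctions {α : Type*} (l : Filter α) : Prop :=
  ∀ N : α → ℕ, l.IsBoundedUnder (· ≤ ·) N

namespace BoundsNatFunctions

variable {α : Type*} {l l' : Filter α}

theorem mono (hl : BoundsNatFunctions l) (h : l' ≤ l) : BoundsNatFunctions l' :=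
  fun N ↦ (hl N).mono h

theorem iInter_mem (hl : BoundsNatFunctions l) {s : ℕ → Set α} (hs : ∀ n, s n ∈ l) :
    ⋂ n, s n ∈ l := by
  obtain ⟨n, hn⟩ := (hl fun a ↦ sInf {m | a ∉ s m}).eventually_le
  have hfirst : ∀ᶠ a in l, ∀ m ∈ Finset.range (n + 1), a ∈ s m :=
    (eventually_all_finset _).2 fun m _ ↦ hs m
  filter_upwards [hn, hfirst] with a ha hfirst
  refine mem_iInter.2 fun m ↦ by_contra fun hm ↦ ?_
  have hnot : a ∉ s (sInf {m | a ∉ s m}) := Nat.sInf_mem (s := {m | a ∉ s m}) ⟨m, hm⟩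
  exact hnot (hfirst _ (Finset.mem_range_succ_iff.2 ha))

theorem countableInterFilter (hl : BoundsNatFunctions l) : CountableInterFilter l where
  countable_sInter_mem S hS hSl := by
    rcases S.eq_empty_or_nonempty with rfl | hne
    · simp
    · obtain ⟨s, rfl⟩ := hS.exists_eq_range hne
      exact hl.iInter_mem (forall_mem_range.1 hSl)

theorem finite_setOf_ultrafilter_le (hl : BoundsNatFunctions l) :
    {F : Ultrafilter α | ↑F ≤ l}.Finite := by
  classical
  by_contra hinf
  obtain ⟨D, hdisj, hD⟩ := exists_pairwise_disjoint_mem_ultrafilter_of_infinite hinf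
  obtain ⟨n, hn⟩ := hl fun a ↦ if h : ∃ m, a ∈ D m then h.choose else 0
  obtain ⟨F, hFl, hDF⟩ := hD (n + 1)
  obtain ⟨a, haD, ha⟩ := F.nonempty_of_mem (inter_mem hDF (hFl (eventually_map.1 hn)))
  have hex : ∃ m, a ∈ D m := ⟨n + 1, haD⟩
  have hindex : hex.choose = n + 1 :=
    hdisj.eq (not_disjoint_iff.2 ⟨a, hex.choose_spec, haD⟩)
  simp only [mem_ofPred_eq, dif_pos hex, hindex] at ha
  omega

end BoundsNatFunctions

section VanishingBall

variable {I : Type*} {V : I → Type*} [∀ i, NormedAddCommGroup (V i)]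

/-- The vectors of norm at most `R` in the bounded product of the `V i` which vanish along `l`.
For `l = 𝓟 B` these vanish on all of `B`. -/
def vanishingBall (l : Filter I) (R : ℝ) : Set (lp V ∞) :=
  {x | ‖x‖ ≤ R ∧ ∀ᶠ i in l, x i = 0}

theorem vanishingBall_mono {l l' : Filter I} {R R' : ℝ} (hl : l' ≤ l) (hR : R ≤ R') :
    vanishingBall (V := V) l R ⊆ vanishingBall l' R' :=
  fun _ hx ↦ ⟨hx.1.trans hR, hx.2.filter_mono hl⟩

theorem vanishingBall_top_subset (R : ℝ) : vanishingBall (V := V) ⊤ R ⊆ {0} :=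
  fun _ hx ↦ lp.ext (funext (eventually_top.1 hx.2))

theorem lp_infty_exists_eq_piecewise (s : Set I) [∀ i, Decidable (i ∈ s)] (x : lp V ∞) :
    ∃ y : lp V ∞, ⇑y = s.piecewise x 0 ∧ ‖y‖ ≤ ‖x‖ := by
  have hle (i : I) : ‖s.piecewise x 0 i‖ ≤ ‖x‖ := by
    by_cases hi : i ∈ s
    · simpa [hi] using lp.norm_apply_le_norm ENNReal.top_ne_zero x i
    · simp [hi]
  exact ⟨⟨s.piecewise x 0, memℓp_infty ⟨‖x‖, forall_mem_range.2 hle⟩⟩, rfl,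
    lp.norm_le_of_forall_le (norm_nonneg x) hle⟩

theorem vanishingBall_principal_inter_subset_add (s t : Set I) (R : ℝ) :
    vanishingBall (V := V) (𝓟 (s ∩ t)) R ⊆ vanishingBall (𝓟 s) R + vanishingBall (𝓟 t) R := by
  classical
  rintro x ⟨hxR, hx⟩
  obtain ⟨y, hy, hyx⟩ := lp_infty_exists_eq_piecewise sᶜ x
  obtain ⟨z, hz, hzx⟩ := lp_infty_exists_eq_piecewise s x
  refine ⟨y, ⟨hyx.trans hxR, ?_⟩, z, ⟨hzx.trans hxR, ?_⟩, ?_⟩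
  · exact eventually_principal.2 fun i hi ↦ by simp [hy, hi]
  · refine eventually_principal.2 fun i hi ↦ ?_
    by_cases his : i ∈ s
    · simpa [hz, his] using eventually_principal.1 hx i ⟨his, hi⟩
    · simp [hz, his]
  · ext i
    change y i + z i = x i
    by_cases hi : i ∈ s <;> simp [hy, hz, hi]

theorem lp_infty_exists_forall_norm_sub_sum_range_le [∀ i, IsUltrametricDist (V i)]
    {x : ℕ → lp V ∞} (hx : ∀ i, ∀ᶠ n in atTop, x n i = 0)
    (hbdd : BddAbove (range fun n ↦ ‖x n‖)) :
    ∃ s : lp V ∞, ∀ m R, 0 ≤ R → (∀ n ≥ m, ‖x n‖ ≤ R) → ‖s - ∑ n ∈ Finset.range m, x n‖ ≤ R := by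
  choose N hN using fun i ↦ eventually_atTop.1 (hx i)
  let s (i : I) : V i := ∑ n ∈ Finset.range (N i), x n i
  have htail (m : ℕ) (R : ℝ) (hR : 0 ≤ R) (hm : ∀ n ≥ m, ‖x n‖ ≤ R) (i : I) :
      ‖s i - ∑ n ∈ Finset.range m, x n i‖ ≤ R := by
    have hs : s i = ∑ n ∈ Finset.range (max m (N i)), x n i :=
      Finset.sum_subset (by simp) fun n _ hn ↦ hN i n (by simpa using hn)
    rw [hs, ← Finset.sum_Ico_eq_sub _ (le_max_left m (N i))]
    exact IsUltrametricDist.norm_sum_le_of_forall_le_of_nonneg hR fun n hn ↦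
      (lp.norm_apply_le_norm ENNReal.top_ne_zero _ _).trans (hm n (Finset.mem_Ico.1 hn).1)
  obtain ⟨C, hC⟩ := hbdd
  have hxC (n : ℕ) : ‖x n‖ ≤ C := hC (mem_range_self n)
  have hs : Memℓp s ∞ := memℓp_infty ⟨C, forall_mem_range.2 fun i ↦ by
    simpa using htail 0 C ((norm_nonneg _).trans (hxC 0)) (fun n _ ↦ hxC n) i⟩
  refine ⟨⟨s, hs⟩, fun m R hR hm ↦ lp.norm_le_of_forall_le hR fun i ↦ ?_⟩
  simpa only [lp.coeFn_sub, lp.coeFn_sum, Pi.sub_apply, Finset.sum_apply] using htail m R hR hm i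

end VanishingBall

section ExceptionalCoords

variable {J : Type*} {W : J → Type*} [∀ j, NormedAddCommGroup (W j)]

/-- The coordinates at which some vector in `f '' X` has norm larger than `r`: the smallest
`J₀` such that `f` maps `X` into the vectors bounded by `r` off `J₀`. -/
def exceptionalCoords {E : Type*} (f : E → lp W ∞) (r : ℝ) (X : Set E) : Set J :=
  {j | ∃ x ∈ X, r < ‖f x j‖}

theorem exceptionalCoords_mono {E : Type*} {f : E → lp W ∞} {r : ℝ} {X Y : Set E} (h : X ⊆ Y) :
    exceptionalCoords f r X ⊆ exceptionalCoords f r Y :=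
  fun _ ⟨x, hx, hr⟩ ↦ ⟨x, h hx, hr⟩

theorem exceptionalCoords_singleton_zero {E : Type*} [AddZeroClass E] (f : E →+ lp W ∞) {r : ℝ}
    (hr : 0 ≤ r) : exceptionalCoords f r {0} = ∅ := by
  simp [exceptionalCoords, hr.not_gt]

theorem exceptionalCoords_add_subset [∀ j, IsUltrametricDist (W j)] {E : Type*} [AddZeroClass E]
    (f : E →+ lp W ∞) (r : ℝ) (X Y : Set E) :
    exceptionalCoords f r (X + Y) ⊆ exceptionalCoords f r X ∪ exceptionalCoords f r Y := by
  rintro j ⟨_, ⟨x, hx, y, hy, rfl⟩, hr⟩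
  have hmax : r < max ‖f x j‖ ‖f y j‖ := by
    refine hr.trans_le ?_
    simpa using IsUltrametricDist.norm_add_le_max (f x j) (f y j)
  exact (lt_max_iff.1 hmax).imp (⟨x, hx, ·⟩) (⟨y, hy, ·⟩)

end ExceptionalCoords

section GlidingHump

variable {I J : Type*} {V : I → Type*} [∀ i, NormedAddCommGroup (V i)]
  {W : J → Type*} [∀ j, NormedAddCommGroup (W j)]

/-- A gliding hump for `f` at height `r`: the image of `x n` has its hump at the coordinate `j n`,
where the images of the earlier vectors are small, and `C * ‖x n‖`, a bound for the image of `x n`,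
stays a definite amount below the earlier humps. -/
structure IsGlidingHump (f : lp V ∞ →+ lp W ∞) (C r : ℝ) (x : ℕ → lp V ∞) (j : ℕ → J) : Prop where
  lt_norm (n : ℕ) : r < ‖f (x n) (j n)‖
  norm_le {m n : ℕ} (hmn : m < n) : ‖f (x m) (j n)‖ ≤ r
  mul_norm_le {m n : ℕ} (hmn : m < n) : C * ‖x n‖ ≤ (r + ‖f (x m) (j m)‖) / 2

namespace IsGlidingHump

variable {f : lp V ∞ →+ lp W ∞} {C r : ℝ} {x : ℕ → lp V ∞} {j : ℕ → J}

theorem injective (h : IsGlidingHump f C r x j) : Function.Injective j := by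
  have hle {m n : ℕ} (hmn : j m = j n) : n ≤ m :=
    not_lt.1 fun hlt ↦ (h.lt_norm m).not_ge (hmn ▸ h.norm_le hlt)
  exact fun m n hmn ↦ le_antisymm (hle hmn.symm) (hle hmn)

theorem bddAbove_range_norm (h : IsGlidingHump f C r x j) (hC : 0 < C) :
    BddAbove (range fun n ↦ ‖x n‖) := by
  refine ⟨max ‖x 0‖ (C⁻¹ * ((r + ‖f (x 0) (j 0)‖) / 2)), forall_mem_range.2 fun n ↦ ?_⟩
  rcases n.eq_zero_or_pos with rfl | hn
  · exact le_max_left _ _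
  · exact ((le_inv_mul_iff₀ hC).2 (h.mul_norm_le hn)).trans (le_max_right _ _)

theorem exists_forall_lt_norm [∀ i, IsUltrametricDist (V i)] [∀ j, IsUltrametricDist (W j)]
    (h : IsGlidingHump f C r x j) (hC : 0 < C) (hf : ∀ x, ‖f x‖ ≤ C * ‖x‖) (hr : 0 ≤ r)
    (hx : ∀ i, ∀ᶠ n in atTop, x n i = 0) :
    ∃ s : lp V ∞, ∀ n, r < ‖f s (j n)‖ := by
  obtain ⟨s, hs⟩ := lp_infty_exists_forall_norm_sub_sum_range_le hx (h.bddAbove_range_norm hC)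
  refine ⟨s, fun m ↦ ?_⟩
  let tail : lp V ∞ := s - ∑ n ∈ Finset.range (m + 1), x n
  have hsplit : f s (j m) =
      (∑ n ∈ Finset.range m, f (x n) (j m) + f tail (j m)) + f (x m) (j m) := by
    simp only [tail, Finset.sum_range_succ, map_sub, map_add, map_sum, lp.coeFn_sub, lp.coeFn_add,
      lp.coeFn_sum, Pi.sub_apply, Pi.add_apply, Finset.sum_apply]
    abel
  have hhead : ‖∑ n ∈ Finset.range m, f (x n) (j m)‖ ≤ r :=
    IsUltrametricDist.norm_sum_le_of_forall_le_of_nonneg hr fun n hn ↦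
      h.norm_le (Finset.mem_range.1 hn)
  have htail : ‖f tail (j m)‖ < ‖f (x m) (j m)‖ := by
    have htail_norm : ‖tail‖ ≤ C⁻¹ * ((r + ‖f (x m) (j m)‖) / 2) :=
      hs (m + 1) _ (by positivity) fun n hn ↦ (le_inv_mul_iff₀ hC).2 (h.mul_norm_le hn)
    calc ‖f tail (j m)‖ ≤ ‖f tail‖ := lp.norm_apply_le_norm ENNReal.top_ne_zero _ _
      _ ≤ C * ‖tail‖ := hf tail
      _ ≤ (r + ‖f (x m) (j m)‖) / 2 := (le_inv_mul_iff₀ hC).1 htail_norm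
      _ < ‖f (x m) (j m)‖ := by linarith [h.lt_norm m]
  have hrest : ‖∑ n ∈ Finset.range m, f (x n) (j m) + f tail (j m)‖ < ‖f (x m) (j m)‖ :=
    (IsUltrametricDist.norm_add_le_max _ _).trans_lt
      (max_lt (hhead.trans_lt (h.lt_norm m)) htail)
  rw [hsplit, IsUltrametricDist.norm_add_eq_max_of_norm_ne_norm hrest.ne, max_eq_right hrest.le]
  exact h.lt_norm m

end IsGlidingHump

end GlidingHump

section ChaseFilter

variable {I J : Type*} {V : I → Type*} [∀ i, NormedAddCommGroup (V i)]
  {W : J → Type*} [∀ j, NormedAddCommGroup (W j)] [∀ j, IsUltrametricDist (W j)]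
  (f : lp V ∞ →+ lp W ∞) {C r : ℝ}

/-- The filter of sets `B` such that, for some radius `R > ρ`, the map `f` exceeds `r` at only
finitely many coordinates on the ball of radius `R` of vectors vanishing on `B`. -/
def chaseFilter (hr : 0 ≤ r) (ρ : ℝ) : Filter I where
  sets := {B | ∃ R > ρ, (exceptionalCoords f r (vanishingBall (𝓟 B) R)).Finite}
  univ_sets := by
    refine ⟨ρ + 1, lt_add_one ρ, finite_empty.subset ?_⟩
    rw [← exceptionalCoords_singleton_zero f hr, principal_univ]
    exact exceptionalCoords_mono (vanishingBall_top_subset _)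
  sets_of_superset := by
    rintro s t ⟨R, hR, hfin⟩ hst
    exact ⟨R, hR, hfin.subset
      (exceptionalCoords_mono (vanishingBall_mono (principal_mono.2 hst) le_rfl))⟩
  inter_sets := by
    rintro s t ⟨R, hR, hs⟩ ⟨R', hR', ht⟩
    refine ⟨min R R', lt_min hR hR', (hs.union ht).subset ?_⟩
    calc exceptionalCoords f r (vanishingBall (𝓟 (s ∩ t)) (min R R'))
        ⊆ exceptionalCoords f r (vanishingBall (𝓟 s) R + vanishingBall (𝓟 t) R') :=
          exceptionalCoords_mono ((vanishingBall_principal_inter_subset_add s t _).trans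
            (add_subset_add (vanishingBall_mono le_rfl (min_le_left _ _))
              (vanishingBall_mono le_rfl (min_le_right _ _))))
      _ ⊆ _ := exceptionalCoords_add_subset f r _ _

theorem mem_chaseFilter {hr : 0 ≤ r} {ρ : ℝ} {B : Set I} :
    B ∈ chaseFilter f hr ρ ↔
      ∃ R > ρ, (exceptionalCoords f r (vanishingBall (𝓟 B) R)).Finite :=
  Iff.rfl

theorem exists_finite_exceptionalCoords_vanishingBall_chaseFilter (hr : 0 ≤ r) (ρ : ℝ)
    [CountableInterFilter (chaseFilter f hr ρ)] :
    ∃ R > ρ, (exceptionalCoords f r (vanishingBall (chaseFilter f hr ρ) R)).Finite := by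
  by_contra! hinf
  obtain ⟨u, -, hρu, hu⟩ := exists_seq_strictAnti_tendsto ρ
  let j (n : ℕ) := Set.Infinite.natEmbedding _ (hinf (u n) (hρu n))
  choose x hx hxj using fun n m ↦ (j n m).2
  have hzero : {i | ∀ n m, x n m i = 0} ∈ chaseFilter f hr ρ :=
    eventually_countable_forall.2 fun n ↦ eventually_countable_forall.2 fun m ↦ (hx n m).2
  obtain ⟨R, hR, hfin⟩ := (mem_chaseFilter f).1 hzero
  obtain ⟨n, hn⟩ := (hu.eventually_lt_const hR).exists
  refine infinite_of_injective_forall_mem (Subtype.val_injective.comp (j n).injective)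
    (fun m ↦ ?_) hfin
  exact ⟨x n m, ⟨(hx n m).1.trans hn.le, eventually_principal.2 fun i hi ↦ hi n m⟩, hxj n m⟩

theorem exists_isGlidingHump_of_not_isBoundedUnder (hC : 0 < C) (hr : 0 ≤ r)
    (hfin : ∀ x, {j | r < ‖f x j‖}.Finite) {N : I → ℕ}
    (hN : ¬ (chaseFilter f hr (C⁻¹ * r)).IsBoundedUnder (· ≤ ·) N) :
    ∃ (x : ℕ → lp V ∞) (j : ℕ → J), IsGlidingHump f C r x j ∧ ∀ i, ∀ᶠ n in atTop, x n i = 0 := by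
  have exists_next (s : Finset (ℕ × lp V ∞ × J)) (hs : ∀ p ∈ s, r < ‖f p.2.1 p.2.2‖) :
      ∃ q : ℕ × lp V ∞ × J, (r < ‖f q.2.1 q.2.2‖ ∧ ∀ i, N i ≤ q.1 → q.2.1 i = 0) ∧
        ∀ p ∈ s, p.1 < q.1 ∧ ‖f p.2.1 q.2.2‖ ≤ r ∧
          C * ‖q.2.1‖ ≤ (r + ‖f p.2.1 p.2.2‖) / 2 := by
    obtain ⟨n, hn⟩ : ∃ n, ∀ p ∈ s, p.1 < n :=
      ⟨s.sup Prod.fst + 1, fun p hp ↦ Nat.lt_succ_of_le (Finset.le_sup hp)⟩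
    obtain ⟨t, ht, hrt⟩ : ∃ t, (∀ p ∈ s, t < (r + ‖f p.2.1 p.2.2‖) / 2) ∧ r < t := by
      have hsmall : ∀ᶠ t in 𝓝[>] r, ∀ p ∈ s, t < (r + ‖f p.2.1 p.2.2‖) / 2 :=
        (eventually_all_finset s).2 fun p hp ↦ mem_nhdsWithin_of_mem_nhds
          (Iio_mem_nhds (by linarith [hs p hp]))
      exact (hsmall.and self_mem_nhdsWithin).exists
    have hinf : (exceptionalCoords f r (vanishingBall (𝓟 {i | N i ≤ n}) (C⁻¹ * t))).Infinite :=
      fun h ↦ hN ⟨n, eventually_map.2 <| (mem_chaseFilter f).2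
        ⟨C⁻¹ * t, mul_lt_mul_of_pos_left hrt (inv_pos.2 hC), h⟩⟩
    obtain ⟨j, ⟨x, ⟨hxt, hx⟩, hj⟩, hjs⟩ := hinf.exists_notMem_finite
      (s.finite_toSet.biUnion fun p _ ↦ hfin p.2.1)
    refine ⟨(n, x, j), ⟨hj, eventually_principal.1 hx⟩, fun p hp ↦ ⟨hn p hp, ?_, ?_⟩⟩
    · exact not_lt.1 fun h ↦ hjs (mem_biUnion hp h)
    · exact ((le_inv_mul_iff₀ hC).1 hxt).trans (ht p hp).le
  obtain ⟨q, hq, hrel⟩ := exists_seq_of_forall_finset_exists _ _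
    fun s hs ↦ exists_next s fun p hp ↦ (hs p hp).1
  refine ⟨fun n ↦ (q n).2.1, fun n ↦ (q n).2.2,
    ⟨fun n ↦ (hq n).1, fun h ↦ (hrel _ _ h).2.1, fun h ↦ (hrel _ _ h).2.2⟩, fun i ↦ ?_⟩
  have hmono : StrictMono fun n ↦ (q n).1 := fun m n h ↦ (hrel m n h).1
  filter_upwards [eventually_ge_atTop (N i)] with n hn
  exact (hq n).2 i (hn.trans hmono.le_apply)

theorem boundsNatFunctions_chaseFilter [∀ i, IsUltrametricDist (V i)] (hC : 0 < C)
    (hf : ∀ x, ‖f x‖ ≤ C * ‖x‖) (hr : 0 ≤ r) (hfin : ∀ x, {j | r < ‖f x j‖}.Finite) :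
    BoundsNatFunctions (chaseFilter f hr (C⁻¹ * r)) := by
  by_contra! hN
  obtain ⟨N, hN⟩ := not_forall.1 hN
  obtain ⟨x, j, h, hx⟩ := exists_isGlidingHump_of_not_isBoundedUnder f hC hr hfin hN
  obtain ⟨s, hs⟩ := h.exists_forall_lt_norm hC hf hr hx
  exact infinite_of_injective_forall_mem h.injective hs (hfin s)

end ChaseFilter

theorem nonarchimedean_chase_lemma_eda_general
    {I J : Type*} {V : I → Type*} [∀ i, NormedAddCommGroup (V i)] [∀ i, IsUltrametricDist (V i)]
    {W : J → Type*} [∀ j, NormedAddCommGroup (W j)] [∀ j, IsUltrametricDist (W j)]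
    (f : lp V ∞ →+ lp W ∞) {C : ℝ} (hC : 0 < C) (hf : ∀ x, ‖f x‖ ≤ C * ‖x‖)
    {r : ℝ} (hr : 0 ≤ r) (hfin : ∀ x, {j | r < ‖f x j‖}.Finite) :
    ∃ r' : ℝ, C⁻¹ * r < r' ∧
      ∃ U₀ : Set (Ultrafilter I), U₀.Finite ∧ (∀ F ∈ U₀, CountablyComplete F) ∧
        ∃ J₀ : Set J, J₀.Finite ∧
          ∀ x : lp V ∞, (∀ F ∈ U₀, {i : I | x i = 0} ∈ F) → (∀ i, ‖x i‖ ≤ r') →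
            ∀ j ∉ J₀, ‖f x j‖ ≤ r := by
  have hl := boundsNatFunctions_chaseFilter f hC hf hr hfin
  have := hl.countableInterFilter
  obtain ⟨r', hr', hJ₀⟩ :=
    exists_finite_exceptionalCoords_vanishingBall_chaseFilter f hr (C⁻¹ * r)
  refine ⟨r', hr', {F | ↑F ≤ chaseFilter f hr (C⁻¹ * r)}, hl.finite_setOf_ultrafilter_le,
    fun F hF s hs ↦ (hl.mono hF).iInter_mem hs, _, hJ₀, fun x hx hxr' j hj ↦ ?_⟩
  have hr'₀ : 0 ≤ r' := le_trans (by positivity) hr'.le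
  exact not_lt.1 fun hlt ↦
    hj ⟨x, ⟨lp.norm_le_of_forall_le hr'₀ hxr', mem_iff_ultrafilter.2 hx⟩, hlt⟩

theorem nonarchimedean_chase_lemma_eda
    {k : Type*} [NontriviallyNormedField k] [CompleteSpace k] [IsUltrametricDist k]
    {I J : Type*}
    (V : I → Type*) [∀ i, NormedAddCommGroup (V i)] [∀ i, NormedSpace k (V i)]
    [∀ i, CompleteSpace (V i)] [∀ i, IsUltrametricDist (V i)]
    (W : J → Type*) [∀ j, NormedAddCommGroup (W j)] [∀ j, NormedSpace k (W j)]
    [∀ j, CompleteSpace (W j)] [∀ j, IsUltrametricDist (W j)]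
    (f : lp V ∞ →L[k] lp W ∞)
    (hf_range : ∀ x : lp V ∞, ∀ ε > (0 : ℝ), {j : J | ε < ‖f x j‖}.Finite)
    (hf_ne : f ≠ 0) :
    ∀ r : ℝ, 0 < r →
      ∃ r' : ℝ, ‖f‖⁻¹ * r < r' ∧
        ∃ U₀ : Set (Ultrafilter I), U₀.Finite ∧ (∀ F ∈ U₀, CountablyComplete F) ∧
          ∃ J₀ : Set J, J₀.Finite ∧
            ∀ x : lp V ∞, (∀ F ∈ U₀, {i : I | x i = 0} ∈ F) → (∀ i, ‖x i‖ ≤ r') →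
              ∀ j ∉ J₀, ‖f x j‖ ≤ r := by
  intro r hr
  exact nonarchimedean_chase_lemma_eda_general (f : lp V ∞ →+ lp W ∞) (norm_pos_iff.2 hf_ne)
    f.le_opNorm hr.le fun x ↦ (hf_range x r hr)
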